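/- Let ℓ be a prime, k an algebraic closure of the field with ℓ elements, n a natural number, and G a finite group possessing a central subgroup Z of order 2 such that G/Z is isomorphic to the symmetric group S_n (i.e. G is a double cover of S_n). Then every block b of kG satisfies mf(kGb) = 1; that is, kGb is Morita equivalent (as a k-algebra) to its first Frobenius twist. -/

import Mathlib

open CategoryTheory

/-- A central idempotent of a ring. -/
def IsCentralIdem {R : Type*} [Ring R] (b : R) : Prop :=
  (∀ x, b * x = x * b) ∧ b * b = b

/-- A block of a ring: a primitive idempotent of the center, i.e. a nonzero central
idempotent that is not a sum of two nonzero orthogonal central idempotents. -/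
def IsBlock {R : Type*} [Ring R] (b : R) : Prop :=
  IsCentralIdem b ∧ b ≠ 0 ∧
    ∀ c d : R, IsCentralIdem c → IsCentralIdem d → c * d = 0 → b = c + d →
      c = 0 ∨ d = 0

/-- The corner of an idempotent `b`, as a non-unital subring of `R`. -/
def cornerSubring {R : Type*} [Ring R] (b : R) : NonUnitalSubring R where
  carrier := {x | b * x = x ∧ x * b = x}
  add_mem' := by
    rintro x y ⟨hx1, hx2⟩ ⟨hy1, hy2⟩
    exact ⟨by rw [mul_add, hx1, hy1], by rw [add_mul, hx2, hy2]⟩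
  zero_mem' := ⟨mul_zero b, zero_mul b⟩
  neg_mem' := by
    rintro x ⟨h1, h2⟩
    exact ⟨by rw [mul_neg, h1], by rw [neg_mul, h2]⟩
  mul_mem' := by
    rintro x y ⟨hx1, hx2⟩ ⟨hy1, hy2⟩
    refine ⟨by rw [← mul_assoc, hx1], by rw [mul_assoc, hy2]⟩

/-- The corner algebra `R·b` of a central idempotent `b`, as a type.  For a block `b`
of a group algebra `kG` this is the block algebra `kG·b`. -/
def Corner {R : Type*} [Ring R] (b : R) : Type _ := cornerSubring b

instance {R : Type*} [Ring R] (b : R) : NonUnitalRing (Corner b) :=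
  inferInstanceAs (NonUnitalRing (cornerSubring b))

/-- For `b` a central idempotent, the corner `R·b` is a unital ring with identity `b`. -/
instance {R : Type*} [Ring R] (b : R) [hb : Fact (IsCentralIdem b)] : Ring (Corner b) where
  __ := (inferInstance : NonUnitalRing (Corner b))
  one := ⟨b, hb.out.2, hb.out.2⟩
  one_mul x := Subtype.ext x.2.1
  mul_one x := Subtype.ext x.2.2

/-- For `b` a central idempotent in a `k`-algebra `R`, the corner `R·b` is a
`k`-algebra with unit `b`. -/
instance {k R : Type*} [CommSemiring k] [Ring R] [Algebra k R] (b : R)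
    [hb : Fact (IsCentralIdem b)] : Algebra k (Corner b) where
  algebraMap :=
    { toFun := fun c => ⟨c • b, by rw [mul_smul_comm, hb.out.2],
        by rw [smul_mul_assoc, hb.out.2]⟩
      map_one' := Subtype.ext (one_smul k b)
      map_mul' := fun c d => Subtype.ext <| by
        show (c * d) • b = (c • b) * (d • b)
        rw [smul_mul_assoc, mul_smul_comm, hb.out.2, smul_smul]
      map_zero' := Subtype.ext (zero_smul k b)
      map_add' := fun c d => Subtype.ext (add_smul c d b) }
  smul c x := ⟨c • x.1, by rw [mul_smul_comm, x.2.1], by rw [smul_mul_assoc, x.2.2]⟩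
  commutes' c x := Subtype.ext <| by
    show (c • b) * x.1 = x.1 * (c • b)
    rw [smul_mul_assoc, mul_smul_comm, x.2.1, x.2.2]
  smul_def' c x := Subtype.ext <| by
    show c • x.1 = (c • b) * x.1
    rw [smul_mul_assoc, x.2.1]

/-- The first Frobenius twist `A^(ℓ)` of a `k`-algebra `A`: the same ring, with the
`k`-action pulled back along `λ ↦ λ^{1/ℓ}`, i.e. `λ · x = λ^{1/ℓ} x`. -/
def FrobTwist (ℓ : ℕ) (A : Type*) : Type _ := A

instance (ℓ : ℕ) (A : Type*) [Ring A] : Ring (FrobTwist ℓ A) := inferInstanceAs (Ring A)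

noncomputable instance (ℓ : ℕ) [Fact ℓ.Prime] (k : Type*) [Field k] [IsAlgClosed k]
    [CharP k ℓ] (A : Type*) [Ring A] [Algebra k A] : Algebra k (FrobTwist ℓ A) :=
  RingHom.toAlgebra' ((algebraMap k A).comp ((frobeniusEquiv k ℓ).symm : k →+* k))
    (fun c x => Algebra.commutes (A := A) ((frobeniusEquiv k ℓ).symm c) x)


/-!
If a Frobenius-semilinear ring automorphism of `kG` fixes the block `b`, then it restricts to an
isomorphism of `kGb` with its Frobenius twist. Raising coefficients to the power `ℓ` is such an
automorphism `σ`, and so is `σ` composed with the twist by the sign character `ε`; we show that one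
of the two fixes `b`.

Take an irreducible representation of `kG` on which `b` acts as `1`, with trace character `χ`, and
let `z` be the central involution, which acts as `1` or `-1`. Conjugacy in the symmetric group shows
that every `ℓ`-regular `g` is conjugate to `g ^ ℓ` or to `z * g ^ ℓ`. If `z` acts as `1`, the values
of `χ` are thus fixed by Frobenius and `σ b = b`. If `z` acts as `-1 ≠ 1`, then `χ` vanishes on
every `g` conjugate to `z * g`, and every other `ℓ`-regular `g` with `ε g = 1` is conjugate to
`g ^ ℓ`. Hence `χ + εχ`, which vanishes where `ε = -1`, is fixed by Frobenius, and `σ` preserves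
the pair `{b, εb}`.

For the claim on elements with `ε g = 1`, suppose first that every lift `t` of a transposition is
conjugate to `z * t`. Then lifts of disjoint odd permutations never commute, so `g` is conjugate to
`z * g` as soon as its image has even order, while for odd order `g` cannot be conjugate to
`z * g ^ ℓ`. Otherwise the transpositions lift to a conjugacy class, and by Coxeter's relations the
preimage of the alternating group is the product of `⟨z⟩` with a normal subgroup of `G`.
-/

section Corner

variable {R : Type*} [Ring R]

lemma IsCentralIdem.mul {b c : R} (hb : IsCentralIdem b) (hc : IsCentralIdem c) :
    IsCentralIdem (b * c) :=
  ⟨fun x => by rw [mul_assoc, hc.1, ← mul_assoc, hb.1, mul_assoc],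
    by rw [mul_assoc, ← mul_assoc c, hc.1 b, mul_assoc b c, hc.2, ← mul_assoc, hb.2]⟩

lemma IsCentralIdem.sub_mul {b c : R} (hb : IsCentralIdem b) (hc : IsCentralIdem c) :
    IsCentralIdem (b - b * c) :=
  ⟨fun x => by rw [_root_.sub_mul, mul_sub, (hb.mul hc).1, hb.1], by
    have hbbc : b * (b * c) = b * c := by rw [← mul_assoc, hb.2]
    rw [_root_.sub_mul, mul_sub, mul_sub, hb.2, (hb.mul hc).2, (hb.mul hc).1, hbbc, sub_self,
      sub_zero]⟩

lemma IsCentralIdem.map {S : Type*} [Ring S] {b : R} (hb : IsCentralIdem b) (s : R ≃+* S) :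
    IsCentralIdem (s b) :=
  ⟨fun y => by
    obtain ⟨x, rfl⟩ := s.surjective y
    rw [← map_mul, ← map_mul, hb.1], by rw [← map_mul, hb.2]⟩

lemma IsBlock.eq_mul_of_mul_ne_zero {b c : R} (hb : IsBlock b) (hc : IsCentralIdem c)
    (hbc : b * c ≠ 0) : b = b * c := by
  have horth : b * c * (b - b * c) = 0 := by
    rw [mul_sub, (hb.1.mul hc).2, (hb.1.mul hc).1, ← mul_assoc, hb.1.2, sub_self]
  exact sub_eq_zero.1 <| (hb.2.2 _ _ (hb.1.mul hc) (hb.1.sub_mul hc) horth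
    (add_sub_cancel _ _).symm).resolve_left hbc

lemma IsBlock.eq_of_mul_ne_zero {b c : R} (hb : IsBlock b) (hc : IsBlock c) (hbc : b * c ≠ 0) :
    b = c := by
  rw [hb.eq_mul_of_mul_ne_zero hc.1 hbc, hb.1.1,
    ← hc.eq_mul_of_mul_ne_zero hb.1 (by rwa [← hb.1.1])]

lemma IsBlock.eq_of_map_ne_zero {A : Type*} [Ring A] {F : Type*} [FunLike F R A]
    [RingHomClass F R A] {b c : R} (hb : IsBlock b) (hc : IsBlock c) (f : F) (hfb : f b = 1)
    (hfc : f c ≠ 0) : b = c :=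
  hb.eq_of_mul_ne_zero hc fun hbc => hfc <| by rw [← one_mul (f c), ← hfb, ← map_mul, hbc, map_zero]

lemma IsBlock.map {S : Type*} [Ring S] {b : R} (hb : IsBlock b) (s : R ≃+* S) :
    IsBlock (s b) := by
  refine ⟨hb.1.map s, s.map_ne_zero_iff.2 hb.2.1, fun c d hc hd hcd hsb => ?_⟩
  have := hb.2.2 _ _ (hc.map s.symm) (hd.map s.symm) (by rw [← map_mul, hcd, map_zero])
    (by rw [← map_add, ← hsb, s.symm_apply_apply])
  simpa only [map_eq_zero_iff s.symm s.symm.injective] using this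

/-- The isomorphism of corners `bRb ≃ s(b) S s(b)` induced by a ring isomorphism `s : R ≃ S`. -/
def cornerRingEquiv {S : Type*} [Ring S] (s : R ≃+* S) {b : R} {c : S} (hs : s b = c) :
    Corner b ≃+* Corner c where
  toFun x := ⟨s x.1, by rw [← hs, ← map_mul, x.2.1], by rw [← hs, ← map_mul, x.2.2]⟩
  invFun y := ⟨s.symm y.1, by rw [← (s.symm_apply_eq).2 hs.symm, ← map_mul, y.2.1],
    by rw [← (s.symm_apply_eq).2 hs.symm, ← map_mul, y.2.2]⟩
  left_inv x := Subtype.ext (s.symm_apply_apply x.1)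
  right_inv y := Subtype.ext (s.apply_symm_apply y.1)
  map_mul' x y := Subtype.ext (map_mul s x.1 y.1)
  map_add' x y := Subtype.ext (map_add s x.1 y.1)

lemma nonempty_corner_algEquiv_frobTwist {ℓ : ℕ} [Fact ℓ.Prime] {k : Type*} [Field k]
    [IsAlgClosed k] [CharP k ℓ] [Algebra k R] {b : R} [Fact (IsCentralIdem b)] (s : R ≃+* R)
    (hs : ∀ (c : k) (x : R), s (c • x) = c ^ ℓ • s x) (hsb : s b = b) :
    Nonempty (Corner b ≃ₐ[k] FrobTwist ℓ (Corner b)) := by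
  let r : FrobTwist ℓ (Corner b) ≃+* Corner b := cornerRingEquiv s hsb
  have hr (c : k) : r (algebraMap k (FrobTwist ℓ (Corner b)) c) = algebraMap k (Corner b) c := by
    refine Subtype.ext ?_
    change s ((frobeniusEquiv k ℓ).symm c • b) = c • b
    rw [hs, hsb, ← frobenius_def, ← coe_frobeniusEquiv,
      (frobeniusEquiv k ℓ).apply_symm_apply c]
  exact ⟨(AlgEquiv.ofRingEquiv hr).symm⟩

end Corner

open Polynomial in
lemma expand_charpoly_pow_char {p : ℕ} [Fact p.Prime] {R : Type*} [CommRing R] [CharP R p]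
    {ι : Type*} [Fintype ι] [DecidableEq ι] [Nonempty ι] (M : Matrix ι ι R) :
    expand R p (M ^ p).charpoly = M.charpoly ^ p := by
  unfold Matrix.charpoly
  rw [AlgHom.map_det, ← Matrix.coe_detMonoidHom,
    ← (Matrix.detMonoidHom : Matrix ι ι R[X] →* R[X]).map_pow]
  refine congrArg Matrix.det (matPolyEquiv.injective ?_)
  rw [map_pow, Matrix.matPolyEquiv_charmatrix, sub_pow_char_of_commute p (C M).commute_X, ← C_pow]
  exact matPolyEquiv_eq_X_pow_sub_C p M

open Polynomial in
lemma trace_pow_char {p : ℕ} [Fact p.Prime] {R : Type*} [CommRing R] [CharP R p]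
    {ι : Type*} [Fintype ι] [DecidableEq ι] (M : Matrix ι ι R) :
    (M ^ p).trace = M.trace ^ p := by
  have hp : p.Prime := Fact.out
  have := CharP.nontrivial_of_char_ne_one (R := R) hp.ne_one
  cases isEmpty_or_nonempty ι
  · simp only [Matrix.trace_eq_zero_of_isEmpty, zero_pow hp.ne_zero]
  have hcoeff := congrArg (coeff · ((Fintype.card ι - 1) * p)) (expand_charpoly_pow_char M)
  simp only [← map_frobenius_expand p, coeff_map, coeff_expand_mul hp.pos] at hcoeff
  rw [Matrix.trace_eq_neg_charpoly_coeff, Matrix.trace_eq_neg_charpoly_coeff, hcoeff,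
    ← map_neg, frobenius_def]

section Representations

variable {k : Type*} [Field k] {R : Type*} [Ring R] [Algebra k R]

lemma exists_map_eq_algebraMap_of_surjective {A : Type*} [Ring A] [Algebra k A]
    [Algebra.IsCentral k A] {ρ : R →ₐ[k] A} (hρ : Function.Surjective ρ) {c : R}
    (hc : ∀ x, c * x = x * c) : ∃ a : k, ρ c = algebraMap k A a := by
  have hmem : ρ c ∈ Subalgebra.center k A := Subalgebra.mem_center_iff.2 fun y => by
    obtain ⟨x, rfl⟩ := hρ y
    rw [← map_mul, ← map_mul, hc]
  obtain ⟨a, ha⟩ := Algebra.mem_bot.1 (Algebra.IsCentral.out hmem)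
  exact ⟨a, ha.symm⟩

lemma map_eq_one_or_neg_one_of_surjective {A : Type*} [Ring A] [Algebra k A]
    [Algebra.IsCentral k A] [Nontrivial A] {ρ : R →ₐ[k] A} (hρ : Function.Surjective ρ) {c : R}
    (hc : ∀ x, c * x = x * c) (hcc : c * c = 1) : ρ c = 1 ∨ ρ c = -1 := by
  obtain ⟨a, ha⟩ := exists_map_eq_algebraMap_of_surjective hρ hc
  have haa : a * a = 1 := (algebraMap k A).injective <| by
    rw [map_mul, ← ha, ← map_mul, hcc, map_one, map_one]
  obtain rfl | rfl := mul_self_eq_one_iff.1 haa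
  · exact .inl (by rw [ha, map_one])
  · exact .inr (by rw [ha, map_neg, map_one])

lemma IsCentralIdem.map_eq_one {A : Type*} [Ring A] [Algebra k A] [Algebra.IsCentral k A]
    {ρ : R →ₐ[k] A} (hρ : Function.Surjective ρ) {b : R} (hb : IsCentralIdem b) (hρb : ρ b ≠ 0) :
    ρ b = 1 := by
  have : Nontrivial A := ⟨_, _, hρb⟩
  obtain ⟨a, ha⟩ := exists_map_eq_algebraMap_of_surjective hρ hb.1
  have haa : IsIdempotentElem a := (algebraMap k A).injective <| by
    rw [map_mul, ← ha, ← map_mul, hb.2]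
  obtain rfl | rfl := IsIdempotentElem.iff_eq_zero_or_one.1 haa
  · exact absurd (ha.trans (map_zero _)) hρb
  · rw [ha, map_one]

lemma IsCentralIdem.exists_surjective_algHom_matrix [IsAlgClosed k] [FiniteDimensional k R]
    {b : R} (hb : IsCentralIdem b) (hb0 : b ≠ 0) :
    ∃ (d : ℕ) (_ : NeZero d) (ρ : R →ₐ[k] Matrix (Fin d) (Fin d) k),
      Function.Surjective ρ ∧ ρ b = 1 := by
  have : IsArtinianRing R := IsArtinianRing.of_finite k R
  obtain ⟨n, d, hd, ⟨e⟩⟩ :=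
    IsSemisimpleRing.exists_algEquiv_pi_matrix_of_isAlgClosed k (R ⧸ Ring.jacobson R)
  have hbJ : b ∉ Ring.jacobson R := fun hmem => hb0 <|
    IsIdempotentElem.eq_zero_of_isNilpotent hb.2 <| by
      obtain ⟨N, hN⟩ := IsSemiprimaryRing.isNilpotent (R := R)
      exact ⟨N, by simpa only [hN, Ideal.zero_eq_bot, Ideal.mem_bot] using Ideal.pow_mem_pow hmem N⟩
  let q := Ideal.Quotient.mkₐ k (Ring.jacobson R)
  have hqb : e (q b) ≠ 0 :=
    (map_ne_zero_iff e e.injective).2 (mt Ideal.Quotient.eq_zero_iff_mem.1 hbJ)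
  obtain ⟨i, hi⟩ := Function.ne_iff.1 hqb
  let ρ := (Pi.evalAlgHom k _ i).comp (e.toAlgHom.comp q)
  have hρ : Function.Surjective ρ :=
    (Function.surjective_eval i).comp (e.surjective.comp (Ideal.Quotient.mkₐ_surjective k _))
  exact ⟨d i, hd i, ρ, hρ, hb.map_eq_one hρ hi⟩

section Character

variable {ι κ : Type*} [Fintype ι] [Fintype κ] [DecidableEq ι] [DecidableEq κ]
  {ρ : R →ₐ[k] Matrix ι ι k} {ρ' : R →ₐ[k] Matrix κ κ k}

/-- The character `x ↦ tr ρ(x)` of a matrix representation `ρ` of an algebra, as a linear form. -/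
def matrixCharacter (ρ : R →ₐ[k] Matrix ι ι k) : R →ₗ[k] k :=
  Matrix.traceLinearMap ι k k ∘ₗ ρ.toLinearMap

lemma matrixCharacter_apply (ρ : R →ₐ[k] Matrix ι ι k) (x : R) :
    matrixCharacter ρ x = (ρ x).trace :=
  rfl

lemma matrixCharacter_mul_left {e : R} (he : ρ e = 1) (x : R) :
    matrixCharacter ρ (e * x) = matrixCharacter ρ x := by
  rw [matrixCharacter_apply, map_mul, he, one_mul, matrixCharacter_apply]

lemma map_eq_zero_of_matrixCharacter_add_eq_zero (hρ' : Function.Surjective ρ')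
    (h : ∀ x, (matrixCharacter ρ + matrixCharacter ρ') x = 0) {x : R} (hx : ρ x = 0) :
    ρ' x = 0 := by
  rw [Matrix.ext_iff_trace_mul_right]
  intro M
  obtain ⟨y, rfl⟩ := hρ' M
  simpa only [LinearMap.add_apply, matrixCharacter_apply, map_mul, hx, zero_mul,
    Matrix.trace_zero, zero_add] using h (x * y)

variable [Nonempty ι]

lemma exists_matrixCharacter_ne_zero (hρ : Function.Surjective ρ) :
    ∃ x, matrixCharacter ρ x ≠ 0 := by
  let i := Classical.arbitrary ι
  obtain ⟨x, hx⟩ := hρ (Matrix.single i i 1)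
  exact ⟨x, by rw [matrixCharacter_apply, hx, Matrix.trace_single_eq_same]; exact one_ne_zero⟩

/- Two surjective representations with opposite characters have the same kernel, hence differ by an
isomorphism of matrix algebras; this preserves traces, so the characters also agree. -/
lemma exists_matrixCharacter_add_ne_zero (h2 : (2 : k) ≠ 0)
    (hρ : Function.Surjective ρ) (hρ' : Function.Surjective ρ') :
    ∃ x, (matrixCharacter ρ + matrixCharacter ρ') x ≠ 0 := by
  by_contra! h
  have hker : RingHom.ker ρ = RingHom.ker ρ' := by
    ext x
    exact ⟨map_eq_zero_of_matrixCharacter_add_eq_zero hρ' h,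
      map_eq_zero_of_matrixCharacter_add_eq_zero hρ fun y => (add_comm _ _).trans (h y)⟩
  let e := (Ideal.quotientKerAlgEquivOfSurjective hρ).symm.trans
    ((Ideal.quotientEquivAlgOfEq k hker).trans (Ideal.quotientKerAlgEquivOfSurjective hρ'))
  have he (x : R) : e (ρ x) = ρ' x := by
    simp only [e, AlgEquiv.trans_apply, Ideal.quotientKerAlgEquivOfSurjective_symm_apply,
      Ideal.quotientEquivAlgOfEq_mk, Ideal.quotientKerAlgEquivOfSurjective_mk]
  obtain ⟨x, hx⟩ := exists_matrixCharacter_ne_zero hρ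
  refine mul_ne_zero h2 hx ?_
  rw [two_mul, ← h x, LinearMap.add_apply, matrixCharacter_apply ρ', ← he, Matrix.trace_map,
    matrixCharacter_apply]

end Character

end Representations

section GroupAlgebra

variable {G : Type*} [Group G]

section SignTwist

variable {k : Type*} [CommRing k]

/-- The endomorphism `g ↦ ε(g) g` of the group algebra given by a sign character `ε`. -/
noncomputable def signTwistHom (ε : G →* ℤˣ) : MonoidAlgebra k G →ₐ[k] MonoidAlgebra k G :=
  MonoidAlgebra.lift k _ G
    { toFun g := MonoidAlgebra.single g ((ε g : ℤ) : k)
      map_one' := by simp [MonoidAlgebra.one_def]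
      map_mul' g h := by simp [MonoidAlgebra.single_mul_single] }

lemma signTwistHom_single (ε : G →* ℤˣ) (g : G) (c : k) :
    signTwistHom ε (MonoidAlgebra.single g c) = MonoidAlgebra.single g (c * ((ε g : ℤ) : k)) := by
  simp [signTwistHom]

lemma signTwistHom_signTwistHom (ε : G →* ℤˣ) (x : MonoidAlgebra k G) :
    signTwistHom ε (signTwistHom ε x) = x := by
  induction x using MonoidAlgebra.induction_linear with
  | zero => simp only [map_zero]
  | add x y hx hy => rw [map_add, map_add, hx, hy]
  | single g c =>
    rw [signTwistHom_single, signTwistHom_single, mul_assoc, ← Int.cast_mul, ← Units.val_mul,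
      Int.units_mul_self, Units.val_one, Int.cast_one, mul_one]

/-- The involutive automorphism `g ↦ ε(g) g` of the group algebra given by a sign character `ε`,
i.e. tensoring modules with `ε`. -/
noncomputable def signTwist (ε : G →* ℤˣ) : MonoidAlgebra k G ≃ₐ[k] MonoidAlgebra k G :=
  AlgEquiv.ofAlgHom (signTwistHom ε) (signTwistHom ε)
    (AlgHom.ext (signTwistHom_signTwistHom ε)) (AlgHom.ext (signTwistHom_signTwistHom ε))

lemma signTwist_single (ε : G →* ℤˣ) (g : G) (c : k) :
    signTwist ε (MonoidAlgebra.single g c) = MonoidAlgebra.single g (c * ((ε g : ℤ) : k)) :=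
  signTwistHom_single ε g c

lemma signTwist_signTwist (ε : G →* ℤˣ) (x : MonoidAlgebra k G) :
    signTwist ε (signTwist ε x) = x :=
  signTwistHom_signTwistHom ε x

end SignTwist

section CoeffFrobenius

variable {k : Type*} [CommRing k] {ℓ : ℕ} [ExpChar k ℓ] [PerfectRing k ℓ]

variable (ℓ) in
/-- The automorphism of the group ring raising every coefficient to the power `ℓ`. -/
noncomputable def coeffFrobenius : MonoidAlgebra k G ≃+* MonoidAlgebra k G :=
  MonoidAlgebra.mapRingEquiv G (frobeniusEquiv k ℓ)

lemma coeffFrobenius_single (g : G) (c : k) :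
    coeffFrobenius ℓ (MonoidAlgebra.single g c) = MonoidAlgebra.single g (c ^ ℓ) := by
  rw [coeffFrobenius, MonoidAlgebra.mapRingEquiv_single, frobeniusEquiv_apply, frobenius_def]

lemma coeffFrobenius_smul (c : k) (x : MonoidAlgebra k G) :
    coeffFrobenius ℓ (c • x) = c ^ ℓ • coeffFrobenius ℓ x := by
  induction x using MonoidAlgebra.induction_linear with
  | zero => simp only [smul_zero, map_zero]
  | add x y hx hy => rw [smul_add, map_add, hx, hy, map_add, smul_add]
  | single g d =>
    simp only [MonoidAlgebra.smul_single, coeffFrobenius_single, smul_eq_mul, mul_pow]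

lemma signTwist_coeffFrobenius (ε : G →* ℤˣ) (x : MonoidAlgebra k G) :
    signTwist ε (coeffFrobenius ℓ x) = coeffFrobenius ℓ (signTwist ε x) := by
  induction x using MonoidAlgebra.induction_linear with
  | zero => simp only [map_zero]
  | add x y hx hy => simp only [map_add, hx, hy]
  | single g c =>
    have hε : (((ε g : ℤ) : k)) ^ ℓ = ((ε g : ℤ) : k) := map_intCast (frobenius k ℓ) _
    rw [coeffFrobenius_single, signTwist_single, signTwist_single, coeffFrobenius_single,
      mul_pow, hε]

variable {θ : MonoidAlgebra k G →ₗ[k] k}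
  (hθ : ∀ g, θ (MonoidAlgebra.of k G g) ^ ℓ = θ (MonoidAlgebra.of k G g))
include hθ

lemma map_coeffFrobenius (x : MonoidAlgebra k G) : θ (coeffFrobenius ℓ x) = θ x ^ ℓ := by
  induction x using MonoidAlgebra.induction_linear with
  | zero => rw [map_zero, map_zero, zero_pow (expChar_pos k ℓ).ne']
  | add x y hx hy => rw [map_add, map_add, hx, hy, map_add, add_pow_expChar]
  | single g c =>
    have hsmul (a : k) : MonoidAlgebra.single g a = a • MonoidAlgebra.of k G g := by
      rw [MonoidAlgebra.of_apply, MonoidAlgebra.smul_single, smul_eq_mul, mul_one]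
    rw [coeffFrobenius_single, hsmul, hsmul, map_smul, map_smul, smul_eq_mul, smul_eq_mul,
      mul_pow, hθ]

lemma map_coeffFrobenius_mul {e : MonoidAlgebra k G} (he : ∀ x, θ (e * x) = θ x)
    (x : MonoidAlgebra k G) : θ (coeffFrobenius ℓ e * x) = θ x := by
  obtain ⟨y, rfl⟩ := (coeffFrobenius ℓ).surjective x
  rw [← map_mul, map_coeffFrobenius hθ, map_coeffFrobenius hθ, he]

end CoeffFrobenius

section Blocks

variable {ℓ : ℕ} {k : Type*} [Field k] [ExpChar k ℓ] {ι : Type*} [Fintype ι] [DecidableEq ι]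
  {ρ : MonoidAlgebra k G →ₐ[k] Matrix ι ι k} {b : MonoidAlgebra k G}

lemma matrixCharacter_add_signTwist_pow (ε : G →* ℤˣ)
    (h : ∀ g, ε g = 1 →
      matrixCharacter ρ (MonoidAlgebra.of k G g) ^ ℓ = matrixCharacter ρ (MonoidAlgebra.of k G g))
    (g : G) :
    (matrixCharacter ρ + matrixCharacter (ρ.comp (signTwist ε).toAlgHom))
        (MonoidAlgebra.of k G g) ^ ℓ =
      (matrixCharacter ρ + matrixCharacter (ρ.comp (signTwist ε).toAlgHom))
        (MonoidAlgebra.of k G g) := by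
  have htwist : (signTwist ε).toAlgHom (MonoidAlgebra.of k G g) =
      ((ε g : ℤ) : k) • MonoidAlgebra.of k G g := by
    rw [MonoidAlgebra.of_apply, MonoidAlgebra.smul_single, smul_eq_mul, mul_comm]
    exact signTwist_single ε g 1
  rw [LinearMap.add_apply, matrixCharacter_apply (ρ.comp _), AlgHom.comp_apply, htwist,
    ← matrixCharacter_apply, map_smul, smul_eq_mul]
  obtain hg | hg := Int.units_eq_one_or (ε g)
  · rw [hg, Units.val_one, Int.cast_one, one_mul, add_pow_expChar, h g hg]
  · rw [hg, Units.val_neg, Units.val_one, Int.cast_neg, Int.cast_one, neg_one_mul, add_neg_cancel,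
      zero_pow (expChar_pos k ℓ).ne']

variable [PerfectRing k ℓ] [Nonempty ι]

lemma IsBlock.coeffFrobenius_eq_self (hb : IsBlock b) (hρ : Function.Surjective ρ)
    (hρb : ρ b = 1)
    (h : ∀ g, matrixCharacter ρ (MonoidAlgebra.of k G g) ^ ℓ =
      matrixCharacter ρ (MonoidAlgebra.of k G g)) :
    coeffFrobenius ℓ b = b := by
  refine (hb.eq_of_map_ne_zero (hb.map (coeffFrobenius ℓ)) ρ hρb fun h0 => ?_).symm
  obtain ⟨x, hx⟩ := exists_matrixCharacter_ne_zero hρ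
  refine hx ((map_coeffFrobenius_mul h (matrixCharacter_mul_left hρb) x).symm.trans ?_)
  rw [matrixCharacter_apply, map_mul, h0, zero_mul, Matrix.trace_zero]

/- The sum `χ + εχ` of the character of `ρ` and its twist takes values fixed by Frobenius on `G`,
and it is invariant under multiplication by `e = b + εb - b(εb)`. -/
lemma IsBlock.coeffFrobenius_eq_self_or (hb : IsBlock b) (h2 : (2 : k) ≠ 0)
    (hρ : Function.Surjective ρ) (hρb : ρ b = 1) (ε : G →* ℤˣ)
    (h : ∀ g, ε g = 1 →
      matrixCharacter ρ (MonoidAlgebra.of k G g) ^ ℓ =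
        matrixCharacter ρ (MonoidAlgebra.of k G g)) :
    coeffFrobenius ℓ b = b ∨ coeffFrobenius ℓ (signTwist ε b) = b := by
  let τ := signTwist (k := k) ε
  let e := b + τ b - b * τ b
  have hτe : τ e = e := by
    simp only [e, τ, map_sub, map_add, map_mul, signTwist_signTwist, hb.1.1]
    abel
  have hρe : ρ e = 1 := by
    simp only [e, map_sub, map_add, map_mul, hρb, one_mul, add_sub_cancel_right]
  have hρτe : ρ.comp τ.toAlgHom e = 1 := (congrArg ρ hτe).trans hρe
  have hθe (x : MonoidAlgebra k G) : (matrixCharacter ρ + matrixCharacter (ρ.comp τ.toAlgHom))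
      (e * x) = (matrixCharacter ρ + matrixCharacter (ρ.comp τ.toAlgHom)) x :=
    congrArg₂ (· + ·) (matrixCharacter_mul_left hρe x) (matrixCharacter_mul_left hρτe x)
  by_contra! hne
  have hσb : ρ (coeffFrobenius ℓ b) = 0 := by
    by_contra h0
    exact hne.1 (hb.eq_of_map_ne_zero (hb.map _) ρ hρb h0).symm
  have hσe : ρ (coeffFrobenius ℓ e) = 0 := by
    have hστb : ρ (coeffFrobenius ℓ (τ b)) = 0 := by
      by_contra h0
      exact hne.2 (hb.eq_of_map_ne_zero ((hb.map τ.toRingEquiv).map _) ρ hρb h0).symm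
    simp only [e, map_sub, map_add, map_mul, hσb, hστb, zero_mul, add_zero, sub_zero]
  have hτσe : ρ.comp τ.toAlgHom (coeffFrobenius ℓ e) = 0 :=
    (congrArg ρ ((signTwist_coeffFrobenius ε e).trans (by rw [hτe]))).trans hσe
  obtain ⟨x, hx⟩ := exists_matrixCharacter_add_ne_zero h2 hρ (ρ' := ρ.comp τ.toAlgHom)
    (hρ.comp τ.surjective)
  refine hx ((map_coeffFrobenius_mul (matrixCharacter_add_signTwist_pow ε h) hθe x).symm.trans ?_)
  rw [LinearMap.add_apply, matrixCharacter_apply, matrixCharacter_apply, map_mul, map_mul, hσe,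
    hτσe, zero_mul, zero_mul, Matrix.trace_zero, add_zero]

end Blocks

section Frobenius

lemma trace_map_eq_of_isConj {R : Type*} [CommRing R] {ι : Type*} [Fintype ι] [DecidableEq ι]
    (φ : G →* Matrix ι ι R) {g h : G} (hgh : IsConj g h) : (φ h).trace = (φ g).trace := by
  obtain ⟨u, rfl⟩ := isConj_iff.1 hgh
  rw [map_mul, Matrix.trace_mul_comm, ← map_mul, ← mul_assoc, inv_mul_cancel, one_mul]

lemma exists_coprime_orderOf_pow_prime_pow (ℓ : ℕ) [Fact ℓ.Prime] [Finite G] (g : G) :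
    ∃ m, ℓ.Coprime (orderOf (g ^ ℓ ^ m)) := by
  have hℓ : ℓ.Prime := Fact.out
  obtain ⟨m, r, hr, hg⟩ := Nat.exists_eq_pow_mul_and_not_dvd (orderOf_pos g).ne' ℓ hℓ.ne_one
  have hm : ℓ ^ m ≠ 0 := pow_ne_zero m hℓ.ne_zero
  refine ⟨m, ?_⟩
  rwa [orderOf_pow_of_dvd hm (Dvd.intro _ hg.symm), hg, Nat.mul_div_cancel_left _ hm.bot_lt,
    hℓ.coprime_iff_not_dvd]

variable {ℓ : ℕ} [Fact ℓ.Prime]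

lemma trace_map_pow_prime_pow {R : Type*} [CommRing R] [CharP R ℓ] {ι : Type*} [Fintype ι]
    [DecidableEq ι] (φ : G →* Matrix ι ι R) (g : G) (m : ℕ) :
    (φ (g ^ ℓ ^ m)).trace = (φ g).trace ^ ℓ ^ m := by
  induction m with
  | zero => simp only [pow_zero, pow_one]
  | succ m ih => rw [pow_succ, pow_mul, pow_mul, map_pow, trace_pow_char, ih]

/- Frobenius is injective on the traces, so `g` may be replaced by its `ℓ`-regular powers. -/
lemma trace_map_pow_eq_self_of_coprime {R : Type*} [CommRing R] [IsReduced R] [CharP R ℓ]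
    {ι : Type*} [Fintype ι] [DecidableEq ι] [Finite G] (φ : G →* Matrix ι ι R) (g : G)
    (h : ∀ m, ℓ.Coprime (orderOf (g ^ ℓ ^ m)) →
      (φ (g ^ ℓ ^ m)).trace ^ ℓ = (φ (g ^ ℓ ^ m)).trace) :
    (φ g).trace ^ ℓ = (φ g).trace := by
  obtain ⟨m, hm⟩ := exists_coprime_orderOf_pow_prime_pow ℓ g
  have hpow := h m hm
  rw [trace_map_pow_prime_pow, ← pow_mul, mul_comm, pow_mul] at hpow
  exact iterateFrobenius_inj R ℓ m hpow

end Frobenius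

section CentralInvolution

variable {ℓ : ℕ} [Fact ℓ.Prime] {k : Type*} [Field k] [CharP k ℓ] {ι : Type*}
  [Fintype ι] [DecidableEq ι] [Finite G] {z : G}

lemma trace_map_pow_eq_self_of_map_eq_one
    (hconj : ∀ g : G, ℓ.Coprime (orderOf g) → IsConj g (g ^ ℓ) ∨ IsConj g (z * g ^ ℓ))
    {φ : G →* Matrix ι ι k} (hφz : φ z = 1) (g : G) : (φ g).trace ^ ℓ = (φ g).trace := by
  refine trace_map_pow_eq_self_of_coprime φ g fun m hm => ?_
  rw [← trace_pow_char, ← map_pow]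
  obtain h | h := hconj _ hm
  · exact trace_map_eq_of_isConj φ h
  · rw [← trace_map_eq_of_isConj φ h, map_mul φ z, hφz, one_mul]

lemma trace_map_pow_eq_self_of_map_eq_neg_one (h2 : (2 : k) ≠ 0) (ε : G →* ℤˣ)
    (hconj : ∀ g : G, ℓ.Coprime (orderOf g) → ε g = 1 → IsConj g (g ^ ℓ) ∨ IsConj g (z * g))
    {φ : G →* Matrix ι ι k} (hφz : φ z = -1) {g : G} (hg : ε g = 1) :
    (φ g).trace ^ ℓ = (φ g).trace := by
  refine trace_map_pow_eq_self_of_coprime φ g fun m hm => ?_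
  obtain h | h := hconj _ hm (by rw [map_pow, hg, one_pow])
  · rw [← trace_pow_char, ← map_pow, trace_map_eq_of_isConj φ h]
  · have hneg := trace_map_eq_of_isConj φ h
    rw [map_mul, hφz, neg_one_mul, Matrix.trace_neg, neg_eq_iff_add_eq_zero, ← two_mul,
      mul_eq_zero_iff_left h2] at hneg
    rw [hneg, zero_pow (Fact.out : ℓ.Prime).ne_zero]

lemma IsBlock.exists_semilinear_fixing [IsAlgClosed k] (hz : ∀ g, Commute z g) (hzz : z * z = 1)
    (ε : G →* ℤˣ)
    (hconj : ∀ g : G, ℓ.Coprime (orderOf g) → IsConj g (g ^ ℓ) ∨ IsConj g (z * g ^ ℓ))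
    (hconjε : ℓ ≠ 2 → ∀ g : G, ℓ.Coprime (orderOf g) → ε g = 1 →
      IsConj g (g ^ ℓ) ∨ IsConj g (z * g))
    {b : MonoidAlgebra k G} (hb : IsBlock b) :
    ∃ s : MonoidAlgebra k G ≃+* MonoidAlgebra k G,
      (∀ (c : k) (x : MonoidAlgebra k G), s (c • x) = c ^ ℓ • s x) ∧ s b = b := by
  obtain ⟨d, _, ρ, hρ, hρb⟩ := hb.1.exists_surjective_algHom_matrix (k := k) hb.2.1
  let φ : G →* Matrix (Fin d) (Fin d) k := (ρ : _ →* _).comp (MonoidAlgebra.of k G)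
  by_cases hφz : φ z = 1
  · exact ⟨coeffFrobenius ℓ, coeffFrobenius_smul, hb.coeffFrobenius_eq_self hρ hρb
      (trace_map_pow_eq_self_of_map_eq_one hconj hφz)⟩
  · have hφz' : φ z = -1 :=
      (map_eq_one_or_neg_one_of_surjective hρ
        (MonoidAlgebra.single_commute hz (Commute.one_left ·))
        (by rw [MonoidAlgebra.single_mul_single, hzz, one_mul]; rfl)).resolve_left hφz
    have h2 : (2 : k) ≠ 0 := fun h2 => hφz <| by
      have h2' := congrArg (algebraMap k (Matrix (Fin d) (Fin d) k)) h2
      rw [map_ofNat, map_zero, ← one_add_one_eq_two] at h2'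
      rw [hφz', neg_eq_of_add_eq_zero_right h2']
    have hℓ2 : ℓ ≠ 2 := by
      rintro rfl
      exact h2 (CharP.cast_eq_zero k 2)
    obtain h | h := hb.coeffFrobenius_eq_self_or h2 hρ hρb ε fun g =>
      trace_map_pow_eq_self_of_map_eq_neg_one h2 ε (hconjε hℓ2) hφz'
    · exact ⟨coeffFrobenius ℓ, coeffFrobenius_smul, h⟩
    · refine ⟨(signTwist ε).toRingEquiv.trans (coeffFrobenius ℓ), fun c x => ?_, h⟩
      exact (congrArg (coeffFrobenius ℓ) (map_smul (signTwist ε) c x)).trans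
        (coeffFrobenius_smul _ _)

end CentralInvolution

end GroupAlgebra

section Perm

open Equiv Equiv.Perm

variable {α : Type*} [DecidableEq α]

lemma eq_swap_apply_of_isSwap {p : Perm α} (hp : p.IsSwap) {a : α} (ha : p a ≠ a) :
    p = swap a (p a) := by
  obtain ⟨c, d, -, rfl⟩ := hp
  obtain ⟨-, rfl | rfl⟩ := swap_apply_ne_self_iff.1 ha
  · rw [swap_apply_left]
  · rw [swap_apply_right, swap_comm]

lemma isSwap_of_isConj {p q : Perm α} (hp : p.IsSwap) (hpq : IsConj p q) : q.IsSwap := by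
  obtain ⟨c, rfl⟩ := isConj_iff.1 hpq
  obtain ⟨a, b, hab, rfl⟩ := hp
  exact ⟨c a, c b, c.injective.ne hab, (swap_apply_apply c a b).symm⟩

lemma disjoint_swap_right {p : Perm α} {a b : α} (ha : p a = a) (hb : p b = b) :
    p.Disjoint (swap a b) := fun x => by
  obtain rfl | hxa := eq_or_ne x a
  · exact .inl ha
  obtain rfl | hxb := eq_or_ne x b
  · exact .inl hb
  · exact .inr (swap_apply_of_ne_of_ne hxa hxb)

lemma disjoint_or_mul_disjoint_of_isSwap_of_commute {p s : Perm α} (hs : s.IsSwap)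
    (h : Commute p s) : p.Disjoint s ∨ (s * p).Disjoint s := by
  obtain ⟨a, b, hab, rfl⟩ := hs
  have hpb : swap a b (p a) = p b := by
    rw [← Perm.mul_apply, ← h.eq, Perm.mul_apply, swap_apply_left]
  have hmove : swap a b (p a) ≠ p a := hpb ▸ p.injective.ne hab.symm
  obtain ⟨-, hpa | hpa⟩ := swap_apply_ne_self_iff.1 hmove
  · rw [hpa, swap_apply_left] at hpb
    exact .inl (disjoint_swap_right hpa hpb.symm)
  · rw [hpa, swap_apply_right] at hpb
    refine .inr (disjoint_swap_right ?_ ?_)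
    · rw [Perm.mul_apply, hpa, swap_apply_right]
    · rw [Perm.mul_apply, ← hpb, swap_apply_left]

variable [Fintype α]

lemma cycleType_pow_of_coprime {p : Perm α} {m : ℕ} (h : m.Coprime (orderOf p)) :
    (p ^ m).cycleType = p.cycleType := by
  induction p using cycle_induction_on with
  | base_one => rw [one_pow]
  | base_cycles p hp =>
    rw [(hp.pow_iff.2 h).cycleType, hp.cycleType, support_pow_coprime h]
  | induction_disjoint p q hd _ ihp ihq =>
    rw [hd.orderOf] at h
    rw [hd.commute.mul_pow, (hd.pow_disjoint_pow m m).cycleType_mul, hd.cycleType_mul,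
      ihp (h.coprime_dvd_right (Nat.dvd_lcm_left _ _)),
      ihq (h.coprime_dvd_right (Nat.dvd_lcm_right _ _))]

lemma exists_disjoint_mul_eq_of_two_dvd_orderOf {p : Perm α} (hp : 2 ∣ orderOf p) :
    ∃ c r, p = c * r ∧ c.Disjoint r ∧ sign c = -1 := by
  have hprod : p.cycleType.lcm ∣ p.cycleType.prod :=
    Multiset.lcm_dvd.2 fun _ => Multiset.dvd_prod
  rw [← lcm_cycleType p] at hp
  obtain ⟨m, hm, h2m⟩ := Nat.prime_two.prime.exists_mem_multiset_dvd (hp.trans hprod)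
  obtain ⟨c, r, hcr, hd, hc, rfl⟩ := mem_cycleType_iff.1 hm
  exact ⟨c, r, hcr, hd, by rw [hc.sign, (even_iff_two_dvd.2 h2m).neg_one_pow]⟩

lemma exists_apply_ne_self_of_sign {p : Perm α} (hp : sign p = -1) : ∃ a, p a ≠ a := by
  by_contra! h
  obtain rfl : p = 1 := Perm.ext h
  rw [Perm.sign_one] at hp
  exact absurd hp (by decide)

end Perm

section Transpositions

open Equiv Equiv.Perm

variable {Γ α : Type*} [Group Γ] {π : Γ →* Perm α} {t : Γ}

lemma mul_self_eq_of_isConj (hsq : ∀ g, Commute (t * t) g) {s : Γ} (hs : IsConj t s) :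
    s * s = t * t := by
  obtain ⟨u, rfl⟩ := isConj_iff.1 hs
  rw [conj_mul, ← (hsq u).eq, mul_inv_cancel_right]

lemma eq_of_isConj_of_map_eq (hinj : ∀ s, IsConj t s → π s = π t → s = t) {r s : Γ}
    (hr : IsConj t r) (hs : IsConj t s) (hrs : π r = π s) : r = s := by
  obtain ⟨u, rfl⟩ := isConj_iff.1 hr
  have hconj : IsConj s (u⁻¹ * s * u) := isConj_iff.2 ⟨u⁻¹, by rw [inv_inv]⟩
  have h := hinj _ (hs.trans hconj) (by rw [map_mul, map_mul, ← hrs]; simp [mul_assoc])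
  rw [← h]
  group

/-- The subgroup generated by `t²` and those conjugates of `t` which, acting through `π`, move only
points of `S`. -/
def conjClosureOn (π : Γ →* Perm α) (t : Γ) (S : Set α) : Subgroup Γ :=
  Subgroup.closure (insert (t * t) {s | IsConj t s ∧ ∀ x ∉ S, π s x = x})

variable {S : Set α} {a : α}

lemma mem_conjClosureOn {s : Γ} (hs : IsConj t s) (hfix : ∀ x ∉ S, π s x = x) :
    s ∈ conjClosureOn π t S :=
  Subgroup.subset_closure (.inr ⟨hs, hfix⟩)

lemma fix_of_fix_insert {p : Perm α} (hp : ∀ y ∉ insert a S, p y = y) (ha : p a = a) :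
    ∀ y ∉ S, p y = y := fun y hy => by
  obtain rfl | hya := eq_or_ne y a
  · exact ha
  · exact hp y (by simp [hya, hy])

variable [DecidableEq α]

lemma map_mul_self_of_isSwap (ht : (π t).IsSwap) : π (t * t) = 1 := by
  obtain ⟨a, b, -, hab⟩ := ht
  rw [map_mul, hab, swap_mul_self]

lemma map_apply_of_mem_conjClosureOn (ht : (π t).IsSwap) {g : Γ} (hg : g ∈ conjClosureOn π t S)
    (ha : a ∉ S) : π g a = a := by
  suffices conjClosureOn π t S ≤ (MulAction.stabilizer (Perm α) a).comap π from this hg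
  rw [conjClosureOn, Subgroup.closure_le, Set.insert_subset_iff]
  refine ⟨?_, fun s hs => hs.2 a ha⟩
  rw [SetLike.mem_coe, Subgroup.mem_comap, map_mul_self_of_isSwap ht]
  exact one_mem _

/-- The elements of `N = conjClosureOn π t S` together with the products `x * h`, where `h ∈ N` and
`x` is a conjugate of `t` moving `a` and otherwise only points of `S`. -/
def conjClosureStep (π : Γ →* Perm α) (t : Γ) (S : Set α) (a : α) : Set Γ :=
  {g | g ∈ conjClosureOn π t S ∨ ∃ x h, IsConj t x ∧ (∀ y ∉ insert a S, π x y = y) ∧ π x a ≠ a ∧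
    h ∈ conjClosureOn π t S ∧ x * h = g}

/- Two conjugates `x ≠ y` of `t` moving `a` act as `(a b)` and `(a c)` with `b ≠ c`, so that
`x⁻¹ y x` acts as `(b c)` and fixes `a`. -/
lemma inv_mul_mul_mem_conjClosureOn (ht : (π t).IsSwap)
    (hinj : ∀ s, IsConj t s → π s = π t → s = t) {x y : Γ} (hx : IsConj t x) (hy : IsConj t y)
    (hxS : ∀ w ∉ insert a S, π x w = w) (hyS : ∀ w ∉ insert a S, π y w = w)
    (hxa : π x a ≠ a) (hya : π y a ≠ a) (hxy : y ≠ x) : x⁻¹ * y * x ∈ conjClosureOn π t S := by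
  have hxs := eq_swap_apply_of_isSwap (isSwap_of_isConj ht (π.map_isConj hx)) hxa
  have hys := eq_swap_apply_of_isSwap (isSwap_of_isConj ht (π.map_isConj hy)) hya
  have hne : π x a ≠ π y a := fun h => hxy <|
    eq_of_isConj_of_map_eq hinj hy hx (by rw [hys, hxs, h])
  have hyx : π y (π x a) = π x a := by
    rw [hys]
    exact swap_apply_of_ne_of_ne hxa hne
  have hconj : IsConj y (x⁻¹ * y * x) := isConj_iff.2 ⟨x⁻¹, by rw [inv_inv]⟩
  refine mem_conjClosureOn (hy.trans hconj) (fix_of_fix_insert (a := a) (fun w hw => ?_) ?_)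
  · rw [map_mul, map_mul, map_inv, Perm.mul_apply, Perm.mul_apply, hxS w hw, hyS w hw,
      inv_eq_iff_eq, hxS w hw]
  · rw [map_mul, map_mul, map_inv, Perm.mul_apply, Perm.mul_apply, hyx, inv_eq_iff_eq]

lemma mul_mem_conjClosureStep (ht : (π t).IsSwap) (hsq : ∀ g, Commute (t * t) g)
    (hinj : ∀ s, IsConj t s → π s = π t → s = t) {y g : Γ} (hy : IsConj t y)
    (hyS : ∀ w ∉ insert a S, π y w = w) (hg : g ∈ conjClosureStep π t S a) :
    y * g ∈ conjClosureStep π t S a := by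
  obtain hg | ⟨x, h, hx, hxS, hxa, hh, rfl⟩ := hg
  · by_cases hya : π y a = a
    · exact .inl (mul_mem (mem_conjClosureOn hy (fix_of_fix_insert hyS hya)) hg)
    · exact .inr ⟨y, g, hy, hyS, hya, hg, rfl⟩
  by_cases hya : π y a = a
  · refine .inr ⟨y * x * y⁻¹, y * h, hx.trans (isConj_iff.2 ⟨y, rfl⟩), fun w hw => ?_, ?_,
      mul_mem (mem_conjClosureOn hy (fix_of_fix_insert hyS hya)) hh, by group⟩
    · rw [map_mul, map_mul, map_inv, Perm.mul_apply, Perm.mul_apply,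
        inv_eq_iff_eq.2 (hyS w hw).symm, hxS w hw, hyS w hw]
    · rw [map_mul, map_mul, map_inv, Perm.mul_apply, Perm.mul_apply, inv_eq_iff_eq.2 hya.symm]
      exact fun h => hxa ((π y).injective (h.trans hya.symm))
  obtain rfl | hxy := eq_or_ne y x
  · rw [← mul_assoc, mul_self_eq_of_isConj hsq hy]
    exact .inl (mul_mem (Subgroup.subset_closure (.inl rfl)) hh)
  · exact .inr ⟨x, x⁻¹ * y * x * h, hx, hxS, hxa, mul_mem
      (inv_mul_mul_mem_conjClosureOn ht hinj hx hy hxS hyS hxa hya hxy) hh, by group⟩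

lemma conjClosureOn_insert_subset (ht : (π t).IsSwap) (hsq : ∀ g, Commute (t * t) g)
    (hinj : ∀ s, IsConj t s → π s = π t → s = t) :
    (conjClosureOn π t (insert a S) : Set Γ) ⊆ conjClosureStep π t S a := fun g hg => by
  have hcentral (w : Γ) (hw : w ∈ Subgroup.zpowers (t * t)) {g : Γ}
      (hg : g ∈ conjClosureStep π t S a) : w * g ∈ conjClosureStep π t S a := by
    obtain ⟨n, rfl⟩ := hw
    have hmem : (t * t) ^ n ∈ conjClosureOn π t S :=
      zpow_mem (Subgroup.subset_closure (.inl rfl)) n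
    obtain hg | ⟨x, h, hx, hxS, hxa, hh, rfl⟩ := hg
    · exact .inl (mul_mem hmem hg)
    · exact .inr ⟨x, _, hx, hxS, hxa, mul_mem hmem hh, (((hsq x).zpow_left n).left_comm h).symm⟩
  induction hg using Subgroup.closure_induction_left with
  | one => exact .inl (one_mem _)
  | mul_left y hy g _ ih =>
    obtain rfl | hy := hy
    · exact hcentral _ (Subgroup.mem_zpowers _) ih
    · exact mul_mem_conjClosureStep ht hsq hinj hy.1 hy.2 ih
  | inv_mul_cancel y hy g _ ih =>
    obtain rfl | hy := hy
    · exact hcentral _ (inv_mem (Subgroup.mem_zpowers _)) ih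
    · have := mul_mem_conjClosureStep ht hsq hinj hy.1 hy.2
        (hcentral _ (inv_mem (Subgroup.mem_zpowers _)) ih)
      rwa [← mul_self_eq_of_isConj hsq hy.1, mul_inv_rev, mul_assoc, mul_inv_cancel_left] at this

lemma mem_zpowers_of_mem_conjClosureOn (ht : (π t).IsSwap) (hsq : ∀ g, Commute (t * t) g)
    (hinj : ∀ s, IsConj t s → π s = π t → s = t) (hS : S.Finite) {g : Γ}
    (hg : g ∈ conjClosureOn π t S) (hπg : π g = 1) : g ∈ Subgroup.zpowers (t * t) := by
  induction S, hS using Set.Finite.induction_on with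
  | empty =>
    suffices conjClosureOn π t ∅ ≤ Subgroup.zpowers (t * t) from this hg
    rw [conjClosureOn, Subgroup.closure_le, Set.insert_subset_iff]
    refine ⟨Subgroup.mem_zpowers _, fun s hs => ?_⟩
    obtain ⟨c, d, hcd, hs'⟩ := isSwap_of_isConj ht (π.map_isConj hs.1)
    exact absurd (hs.2 d (Set.notMem_empty d)) (by rwa [hs', swap_apply_right])
  | @insert a S ha _ ih =>
    obtain hg | ⟨x, h, -, -, hxa, hh, rfl⟩ := conjClosureOn_insert_subset ht hsq hinj hg
    · exact ih hg
    · refine absurd ?_ hxa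
      rw [← map_apply_of_mem_conjClosureOn ht hh ha, ← Perm.mul_apply, ← map_mul, hπg,
        map_apply_of_mem_conjClosureOn ht hh ha, Perm.one_apply]

/- The Coxeter presentation of the symmetric group in disguise. -/
lemma normalClosure_inf_ker_le_zpowers [Finite α] (ht : (π t).IsSwap)
    (hsq : ∀ g, Commute (t * t) g) (hinj : ∀ s, IsConj t s → π s = π t → s = t) :
    Subgroup.normalClosure {t} ⊓ π.ker ≤ Subgroup.zpowers (t * t) := fun g ⟨hg, hπg⟩ => by
  refine mem_zpowers_of_mem_conjClosureOn ht hsq hinj Set.finite_univ ?_ hπg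
  refine Subgroup.closure_mono (fun s hs => .inr ⟨?_, fun x hx => absurd (Set.mem_univ x) hx⟩) hg
  simpa only [Group.mem_conjugatesOfSet_iff, Set.mem_singleton_iff, exists_eq_left] using hs

end Transpositions

section DoubleCover

open Equiv Equiv.Perm

/-- `π : G → P` is a double cover: a surjective homomorphism with kernel `{1, z}`, where `z ≠ 1`. -/
structure IsDoubleCover {G P : Type*} [Group G] [Group P] (π : G →* P) (z : G) : Prop where
  surjective : Function.Surjective π
  map_eq_one_iff : ∀ g, π g = 1 ↔ g = 1 ∨ g = z
  ne_one : z ≠ 1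

variable {G P : Type*} [Group G] [Group P]

lemma exists_isDoubleCover {N : Subgroup G} [N.Normal] (hN : Nat.card N = 2) (e : G ⧸ N ≃* P) :
    ∃ z, IsDoubleCover (e.toMonoidHom.comp (QuotientGroup.mk' N)) z := by
  obtain ⟨z, hz, huniq⟩ := (Nat.card_eq_two_iff' (1 : N)).1 hN
  refine ⟨z, e.surjective.comp (QuotientGroup.mk'_surjective N), fun g => ?_,
    fun h => hz (Subtype.ext h)⟩
  rw [MonoidHom.comp_apply, MulEquiv.coe_toMonoidHom, EmbeddingLike.map_eq_one_iff,
    QuotientGroup.mk'_apply, QuotientGroup.eq_one_iff]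
  constructor
  · intro hg
    by_contra! h
    exact h.2 (congrArg Subtype.val (huniq ⟨g, hg⟩ fun h1 => h.1 (congrArg Subtype.val h1)))
  · rintro (rfl | rfl)
    exacts [one_mem N, z.2]

namespace IsDoubleCover

section Basic

variable {π : G →* P} {z : G} (hπ : IsDoubleCover π z)
include hπ

lemma map_self : π z = 1 :=
  (hπ.map_eq_one_iff z).2 (.inr rfl)

lemma map_self_mul (g : G) : π (z * g) = π g := by
  rw [map_mul, hπ.map_self, one_mul]

lemma mul_self : z * z = 1 :=
  ((hπ.map_eq_one_iff _).1 ((hπ.map_self_mul z).trans hπ.map_self)).resolve_right fun h =>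
    hπ.ne_one (mul_eq_left.1 h)

lemma commute (g : G) : Commute z g := by
  have hker : π (g * z * g⁻¹) = 1 := by
    rw [map_mul, map_mul, hπ.map_self, mul_one, map_inv, mul_inv_cancel]
  obtain h | h := (hπ.map_eq_one_iff _).1 hker
  · exact absurd (conj_eq_one_iff.1 h) hπ.ne_one
  · exact (mul_inv_eq_iff_eq_mul.1 h).symm

lemma eq_or_eq_mul {g h : G} (hgh : π g = π h) : h = g ∨ h = z * g := by
  have hker : π (h * g⁻¹) = 1 := by rw [map_mul, map_inv, hgh, mul_inv_cancel]
  exact ((hπ.map_eq_one_iff _).1 hker).imp mul_inv_eq_one.1 mul_inv_eq_iff_eq_mul.1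

lemma mul_ne (g : G) : z * g ≠ g := fun h =>
  hπ.ne_one (mul_eq_right.1 h)

lemma pow_of_odd {n : ℕ} (hn : Odd n) : z ^ n = z := by
  obtain ⟨m, rfl⟩ := hn
  rw [pow_succ, pow_mul, pow_two, hπ.mul_self, one_pow, one_mul]

lemma isConj_or_isConj_mul {g h : G} (hgh : IsConj (π g) (π h)) :
    IsConj g h ∨ IsConj g (z * h) := by
  obtain ⟨c, hc⟩ := isConj_iff.1 hgh
  obtain ⟨u, rfl⟩ := hπ.surjective c
  have hmap : π (u * g * u⁻¹) = π h := by rw [map_mul, map_mul, map_inv, hc]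
  have hu : IsConj g (u * g * u⁻¹) := isConj_iff.2 ⟨u, rfl⟩
  obtain h | h := hπ.eq_or_eq_mul hmap.symm
  · exact .inl (h ▸ hu)
  · exact .inr (h ▸ hu)

lemma commute_or_mul_eq {g h : G} (hgh : Commute (π g) (π h)) :
    Commute g h ∨ g * h = z * (h * g) :=
  hπ.eq_or_eq_mul (by rw [map_mul, map_mul, hgh.eq])

lemma isConj_mul_of_not_commute {g h : G} (hgh : Commute (π g) (π h)) (h1 : ¬Commute g h) :
    IsConj h (z * h) :=
  isConj_iff.2 ⟨g, by
    rw [(hπ.commute_or_mul_eq hgh).resolve_left h1, ← mul_assoc, mul_inv_cancel_right]⟩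

lemma commute_congr {g h h' : G} (hh : π h = π h') : Commute h g ↔ Commute h' g := by
  obtain rfl | rfl := hπ.eq_or_eq_mul hh
  · rfl
  · exact ⟨(hπ.commute g).mul_left, fun hc => by
      simpa only [← mul_assoc, hπ.mul_self, one_mul] using (hπ.commute g).mul_left hc⟩

lemma commute_mul_iff {g h h' : G} (hg : Commute (π h) (π g)) (hg' : Commute (π h') (π g)) :
    Commute (h * h') g ↔ (Commute h g ↔ Commute h' g) := by
  by_cases h1 : Commute h g
  · refine ⟨fun hc => iff_of_true h1 ?_, fun hc => h1.mul_left (hc.1 h1)⟩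
    simpa only [inv_mul_cancel_left] using h1.inv_left.mul_left hc
  · by_cases h2 : Commute h' g
    · refine ⟨fun hc => absurd ?_ h1, fun hc => absurd (hc.2 h2) h1⟩
      simpa only [mul_inv_cancel_right] using hc.mul_left h2.inv_left
    · refine ⟨fun _ => iff_of_false h1 h2, fun _ => ?_⟩
      have e1 := (hπ.commute_or_mul_eq hg).resolve_left h1
      have e2 := (hπ.commute_or_mul_eq hg').resolve_left h2
      calc h * h' * g = h * z * (g * h') := by rw [mul_assoc, e2, mul_assoc]
        _ = z * (h * g) * h' := by rw [← (hπ.commute h).eq]; group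
        _ = z * z * g * h * h' := by rw [e1]; group
        _ = g * (h * h') := by rw [hπ.mul_self, one_mul, mul_assoc]

lemma not_isConj_mul_pow_of_odd {ℓ : ℕ} (hℓ : Odd ℓ) {g : G} (hg : Odd (orderOf (π g))) :
    ¬IsConj g (z * g ^ ℓ) := fun h => by
  obtain ⟨u, hu⟩ := isConj_iff.1 h
  have hpow := congrArg (· ^ orderOf (π g)) hu
  simp only [conj_pow, ((hπ.commute g).pow_right ℓ).mul_pow, hπ.pow_of_odd hg, pow_right_comm g ℓ]
    at hpow
  obtain h1 | h1 := (hπ.map_eq_one_iff (g ^ orderOf (π g))).1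
    (by rw [map_pow, pow_orderOf_eq_one])
  · rw [h1, one_pow, mul_one, mul_one, mul_inv_cancel] at hpow
    exact hπ.ne_one hpow.symm
  · rw [h1, hπ.pow_of_odd hℓ, hπ.mul_self, ← (hπ.commute u).eq, mul_inv_cancel_right] at hpow
    exact hπ.ne_one hpow

end Basic

lemma isConj_pow_or_isConj_mul_pow {α : Type*} [Finite α] {π : G →* Perm α} {z : G}
    (hπ : IsDoubleCover π z) {m : ℕ} {g : G} (hm : m.Coprime (orderOf g)) :
    IsConj g (g ^ m) ∨ IsConj g (z * g ^ m) := by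
  classical
  have := Fintype.ofFinite α
  refine hπ.isConj_or_isConj_mul (isConj_iff_cycleType_eq.2 ?_)
  rw [map_pow, cycleType_pow_of_coprime (hm.coprime_dvd_right (orderOf_map_dvd π g))]

variable {α : Type*} [DecidableEq α] {π : G →* Perm α} {z : G} (hπ : IsDoubleCover π z)
include hπ

section Splitting

variable {t : G}

/-- The products of conjugates of `t` and of their inverses in which the exponents sum to `0`. It
splits the preimage of the alternating group when `t` lies over a transposition and is not conjugate
to `z * t`. The integer component keeps track of the exponent sum. -/
def conjClosureZero (t : G) : Subgroup G :=
  (Subgroup.normalClosure {(t, Multiplicative.ofAdd (1 : ℤ))}).comap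
    (MonoidHom.inl G (Multiplicative ℤ))

lemma eq_one_of_mem_conjClosureZero [Finite α] (ht : (π t).IsSwap) (htz : ¬IsConj t (z * t)) {g : G}
    (hg : g ∈ conjClosureZero t) (hπg : π g = 1) : g = 1 := by
  let τ : G × Multiplicative ℤ := (t, .ofAdd 1)
  have hsq (x : G × Multiplicative ℤ) : Commute (τ * τ) x := by
    refine Commute.prod ?_ (Commute.all _ _)
    change Commute (t * t) x.1
    obtain h | h := (hπ.map_eq_one_iff _).1 (map_mul_self_of_isSwap ht)
    · exact h ▸ Commute.one_left x.1
    · exact h ▸ hπ.commute x.1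
  have hinj (s : G × Multiplicative ℤ) (hs : IsConj τ s) (hsτ : π s.1 = π t) : s = τ := by
    obtain ⟨u, rfl⟩ := isConj_iff.1 hs
    refine Prod.ext ((hπ.eq_or_eq_mul hsτ.symm).resolve_right fun h => htz ?_) ?_
    · exact h ▸ isConj_iff.2 ⟨u.1, rfl⟩
    · exact mul_inv_cancel_comm _ _
  obtain ⟨n, hn⟩ := normalClosure_inf_ker_le_zpowers
    (π := π.comp (MonoidHom.fst G (Multiplicative ℤ))) (t := τ) ht hsq hinj
    (Subgroup.mem_inf.2 ⟨hg, MonoidHom.mem_ker.2 hπg⟩)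
  obtain rfl : n = 0 := by
    have := congrArg (fun x => Multiplicative.toAdd x.2) hn
    simpa [τ] using this
  exact congrArg Prod.fst (hn.symm.trans (zpow_zero _))

variable [Fintype α]

lemma exists_mem_normalClosure (ht : (π t).IsSwap) (p : Perm α) :
    ∃ (g : G) (n : ℤ), π g = p ∧ sign p = n.negOnePow ∧
      (g, Multiplicative.ofAdd n) ∈
        Subgroup.normalClosure {(t, Multiplicative.ofAdd (1 : ℤ))} := by
  induction p using swap_induction_on with
  | one => exact ⟨1, 0, map_one π, by simp, one_mem _⟩
  | swap_mul f a b hab ih =>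
    obtain ⟨g, n, rfl, hsign, hg⟩ := ih
    obtain ⟨c, d, hcd, htcd⟩ := ht
    obtain ⟨q, hq⟩ := isConj_iff.1 (isConj_swap hcd hab)
    obtain ⟨u, rfl⟩ := hπ.surjective q
    refine ⟨u * t * u⁻¹ * g, 1 + n, ?_, ?_, ?_⟩
    · rw [map_mul, map_mul, map_mul, map_inv, htcd, hq]
    · rw [map_mul, sign_swap hab, hsign, Int.negOnePow_add, Int.negOnePow_one]
    · have hconj := Subgroup.normalClosure_normal.conj_mem _
        (Subgroup.subset_normalClosure (Set.mem_singleton (t, Multiplicative.ofAdd (1 : ℤ))))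
        (u, 1)
      simpa using mul_mem hconj hg

lemma mem_conjClosureZero_or_mul_mem (ht : (π t).IsSwap) {g : G} (hg : sign (π g) = 1) :
    g ∈ conjClosureZero t ∨ z * g ∈ conjClosureZero t := by
  obtain ⟨h, n, hhg, hsign, hh⟩ := hπ.exists_mem_normalClosure ht (π g)
  obtain ⟨m, rfl⟩ := (Int.negOnePow_eq_one_iff n).1 (hsign.symm.trans hg)
  let τ : G × Multiplicative ℤ := (t, .ofAdd 1)
  have hτ : τ ∈ Subgroup.normalClosure {τ} := Subgroup.subset_normalClosure rfl
  have hmem : h * (t * t) ^ (-m) ∈ conjClosureZero t := by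
    have hpair : (h, Multiplicative.ofAdd (m + m)) * (τ * τ) ^ (-m) =
        (h * (t * t) ^ (-m), Multiplicative.ofAdd 0) := by
      refine Prod.ext rfl (Multiplicative.toAdd.injective ?_)
      simp only [τ, Prod.snd_mul, Prod.pow_snd, toAdd_mul, toAdd_zpow, toAdd_ofAdd, smul_eq_mul]
      ring
    rw [conjClosureZero, Subgroup.mem_comap, MonoidHom.inl_apply, ← ofAdd_zero, ← hpair]
    exact mul_mem hh (zpow_mem (mul_mem hτ hτ) (-m))
  have hmap : π g = π (h * (t * t) ^ (-m)) := by
    rw [map_mul, map_zpow, map_mul_self_of_isSwap ht, one_zpow, mul_one, hhg]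
  obtain heq | heq := hπ.eq_or_eq_mul hmap
  · exact .inl (heq ▸ hmem)
  · exact .inr (heq ▸ hmem)

lemma not_isConj_mul_pow (ht : (π t).IsSwap) (htz : ¬IsConj t (z * t)) {m : ℕ} (hm : Odd m) {g : G}
    (hg : sign (π g) = 1) : ¬IsConj g (z * g ^ m) := fun hconj => by
  have hnormal : (conjClosureZero t).Normal := Subgroup.normalClosure_normal.comap _
  obtain ⟨u, hu⟩ := isConj_iff.1 hconj
  obtain ⟨a, ha, hua⟩ : ∃ a ∈ conjClosureZero t, u * a * u⁻¹ = z * a ^ m := by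
    obtain h | h := hπ.mem_conjClosureZero_or_mul_mem ht hg
    · exact ⟨g, h, hu⟩
    · refine ⟨z * g, h, ?_⟩
      rw [(hπ.commute g).mul_pow, hπ.pow_of_odd hm, ← mul_assoc u, ← (hπ.commute u).eq,
        mul_assoc z, mul_assoc z, hu]
  have hz : z ∈ conjClosureZero t := by
    rw [← mul_inv_cancel_right z (a ^ m), ← hua]
    exact mul_mem (hnormal.conj_mem a ha u) (inv_mem (pow_mem ha m))
  exact hπ.ne_one (hπ.eq_one_of_mem_conjClosureZero ht htz hz hπ.map_self)

end Splitting

section Commutation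

lemma exists_monoidHom_eq_one_iff_commute (g : G) :
    ∃ χ : Perm (Function.fixedPoints (π g)) →* ℤˣ,
      ∀ h p, π h = ofSubtype p → (χ p = 1 ↔ Commute h g) := by
  classical
  choose lift hlift using hπ.surjective
  let χ (p : Perm (Function.fixedPoints (π g))) : ℤˣ :=
    if Commute (lift (ofSubtype p)) g then 1 else -1
  have hχ (h : G) (p) (hp : π h = ofSubtype p) : χ p = 1 ↔ Commute h g := by
    rw [hπ.commute_congr (hp.trans (hlift _).symm)]
    simp only [χ, ite_eq_left_iff, neg_units_ne_self, imp_false, not_not]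
  have hdisj (p : Perm (Function.fixedPoints (π g))) : Commute (π (lift (ofSubtype p))) (π g) := by
    rw [hlift]
    exact (disjoint_ofSubtype_of_memFixedPoints_self p).commute
  have hunits : ∀ a b c : ℤˣ, (c = 1 ↔ (a = 1 ↔ b = 1)) → c = a * b := by decide
  refine ⟨MonoidHom.mk' χ fun p q => hunits _ _ _ ?_, hχ⟩
  rw [hχ _ p (hlift _), hχ _ q (hlift _), ← hπ.commute_mul_iff (hdisj p) (hdisj q)]
  exact hχ _ _ (by rw [map_mul, map_mul, hlift, hlift])

variable [Fintype α]

/- The only homomorphisms from a symmetric group to `{1, -1}` are the trivial one and the sign. -/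
lemma commute_or_commute_iff_sign (g : G) :
    (∀ h, (π h).Disjoint (π g) → Commute h g) ∨
      ∀ h, (π h).Disjoint (π g) → (Commute h g ↔ sign (π h) = 1) := by
  obtain ⟨χ, hχ⟩ := hπ.exists_monoidHom_eq_one_iff_commute g
  have hrestrict (h : G) (hd : (π h).Disjoint (π g)) :
      ∃ p : Perm (Function.fixedPoints (π g)), π h = ofSubtype p := by
    refine ⟨(π h).subtypePerm fun x => ?_,
      (ofSubtype_subtypePerm _ fun x hx => (hd x).resolve_left hx).symm⟩
    exact apply_mem_fixedPoints_iff_mem_of_mem_centralizer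
      (Subgroup.mem_centralizer_singleton_iff.2 hd.commute.eq)
  by_cases htriv : ∀ p, χ p = 1
  · refine .inl fun h hd => ?_
    obtain ⟨p, hp⟩ := hrestrict h hd
    exact (hχ h p hp).1 (htriv p)
  · push Not at htriv
    obtain ⟨p₀, hp₀⟩ := htriv
    have hsurj : Function.Surjective χ := fun e => by
      obtain rfl | rfl := Int.units_eq_one_or e
      exacts [⟨1, map_one χ⟩, ⟨p₀, (Int.units_eq_one_or _).resolve_left hp₀⟩]
    refine .inr fun h hd => ?_
    obtain ⟨p, hp⟩ := hrestrict h hd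
    rw [← hχ h p hp, eq_sign_of_surjective_hom hsurj, hp, sign_ofSubtype]

lemma not_commute_of_isSwap {t : G} (ht : (π t).IsSwap) (htz : IsConj t (z * t)) {h : G}
    (hd : (π h).Disjoint (π t)) (hh : sign (π h) = -1) : ¬Commute h t := by
  obtain ⟨u, hu⟩ := isConj_iff.1 htz
  have hut : ¬Commute u t := fun hc => hπ.mul_ne t <| by rw [← hu, hc.eq, mul_inv_cancel_right]
  have hut' : ¬Commute (t * u) t := fun hc => hut <| by
    simpa only [inv_mul_cancel_left] using (Commute.refl t).inv_left.mul_left hc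
  have hcomm : Commute (π u) (π t) := by
    rw [Commute, SemiconjBy, ← map_mul, ← map_mul, mul_inv_eq_iff_eq_mul.1 hu, mul_assoc,
      hπ.map_self_mul]
  obtain hall | hsign := hπ.commute_or_commute_iff_sign t
  · obtain hd | hd := disjoint_or_mul_disjoint_of_isSwap_of_commute ht hcomm
    · exact absurd (hall u hd) hut
    · exact absurd (hall (t * u) (by rwa [map_mul])) hut'
  · rw [hsign h hd, hh]
    decide

lemma not_commute_of_disjoint (hswap : ∀ t, (π t).IsSwap → IsConj t (z * t)) {g h : G}
    (hd : (π h).Disjoint (π g)) (hg : sign (π g) = -1) (hh : sign (π h) = -1) :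
    ¬Commute h g := by
  obtain ⟨a, ha⟩ := exists_apply_ne_self_of_sign hh
  obtain ⟨t, ht⟩ := hπ.surjective (swap a (π h a))
  have htswap : (π t).IsSwap := ⟨a, _, ha.symm, ht⟩
  have hdt : (π g).Disjoint (π t) := ht ▸ disjoint_swap_right ((hd a).resolve_left ha)
    ((hd (π h a)).resolve_left fun h => ha ((π _).injective h))
  have htg : ¬Commute t g := fun hc =>
    hπ.not_commute_of_isSwap htswap (hswap t htswap) hdt hg hc.symm
  obtain hall | hsign := hπ.commute_or_commute_iff_sign g
  · exact absurd (hall t hdt.symm) htg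
  · rw [hsign h hd, hh]
    decide

lemma isConj_mul_of_two_dvd_orderOf (hswap : ∀ t, (π t).IsSwap → IsConj t (z * t)) {g : G}
    (hg : sign (π g) = 1) (h2 : 2 ∣ orderOf (π g)) : IsConj g (z * g) := by
  obtain ⟨c, r, hcr, hd, hc⟩ := exists_disjoint_mul_eq_of_two_dvd_orderOf h2
  obtain ⟨u, rfl⟩ := hπ.surjective c
  obtain ⟨v, rfl⟩ := hπ.surjective r
  have hv : sign (π v) = -1 := by
    rw [hcr, map_mul, hc, neg_one_mul, neg_eq_iff_eq_neg] at hg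
    exact hg
  have hvg : Commute (π u) (π g) := by
    rw [hcr]
    exact (Commute.refl _).mul_right hd.commute
  refine hπ.isConj_mul_of_not_commute hvg fun hug => ?_
  have hug' := (hπ.commute_congr (h' := u * v) (g := u) (by rw [hcr, map_mul])).1 hug.symm
  refine hπ.not_commute_of_disjoint hswap hd.symm hc hv ?_
  simpa only [inv_mul_cancel_left] using (Commute.refl u).inv_left.mul_left hug'

end Commutation

lemma isConj_pow_or_isConj_mul [Fintype α] {m : ℕ} (hm : Odd m) {g : G}
    (hg : m.Coprime (orderOf g)) (hsign : sign (π g) = 1) :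
    IsConj g (g ^ m) ∨ IsConj g (z * g) := by
  by_cases hswap : ∀ t, (π t).IsSwap → IsConj t (z * t)
  · by_cases h2 : 2 ∣ orderOf (π g)
    · exact .inr (hπ.isConj_mul_of_two_dvd_orderOf hswap hsign h2)
    · exact .inl ((hπ.isConj_pow_or_isConj_mul_pow hg).resolve_right
        (hπ.not_isConj_mul_pow_of_odd hm (Nat.not_even_iff_odd.1 (mt even_iff_two_dvd.1 h2))))
  · push Not at hswap
    obtain ⟨t, ht, htz⟩ := hswap
    exact .inl ((hπ.isConj_pow_or_isConj_mul_pow hg).resolve_right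
      (hπ.not_isConj_mul_pow ht htz hm hsign))

end IsDoubleCover

end DoubleCover

lemma exists_linear_equivalence_of_algEquiv.{w} {k A B : Type*} [Field k] [Ring A] [Ring B]
    [Algebra k A] [Algebra k B] (e : A ≃ₐ[k] B) :
    ∃ E : ModuleCat.{w} A ≌ ModuleCat.{w} B, ∃ _ : E.functor.Additive, E.functor.Linear k :=
  ⟨ModuleCat.restrictScalarsEquivalenceOfRingEquiv e.symm.toRingEquiv, inferInstance,
    ModuleCat.Algebra.restrictScalarsEquivalenceOfRingEquiv_linear e.symm⟩

theorem double_cover_symmetricGroup_block_morita_frobenius_number_one_general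
    (ℓ : ℕ) [Fact ℓ.Prime] {k : Type*} [Field k] [IsAlgClosed k] [CharP k ℓ]
    {α : Type*} [Finite α] {G : Type*} [Group G] [Finite G] {π : G →* Equiv.Perm α} {z : G}
    (hπ : IsDoubleCover π z) {b : MonoidAlgebra k G} (hb : IsBlock b) [Fact (IsCentralIdem b)] :
    Nonempty (Corner b ≃ₐ[k] FrobTwist ℓ (Corner b)) := by
  classical
  have := Fintype.ofFinite α
  have hℓ : ℓ.Prime := Fact.out
  obtain ⟨s, hs, hsb⟩ := hb.exists_semilinear_fixing hπ.commute hπ.mul_self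
    (Equiv.Perm.sign.comp π) (fun _ => hπ.isConj_pow_or_isConj_mul_pow)
    fun hℓ2 _ => hπ.isConj_pow_or_isConj_mul (hℓ.odd_of_ne_two hℓ2)
  exact nonempty_corner_algEquiv_frobTwist s hs hsb

/-- Let `G` be a double cover of the symmetric group `S_n`: a finite group with a
central subgroup `Z` of order `2` such that `G/Z ≅ S_n`.  Every block `b` of `kG`,
with `k` an algebraic closure of `𝔽_ℓ`, has Morita Frobenius number `1`: the block
algebra `kG·b` is Morita equivalent, as a `k`-algebra, to its first Frobenius twist;
i.e. there is a `k`-linear equivalence between the module categories of `kG·b` and of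
its first Frobenius twist. -/
theorem double_cover_symmetricGroup_block_morita_frobenius_number_one
    (ℓ : ℕ) [Fact ℓ.Prime] (k : Type) [Field k] [IsAlgClosed k] [CharP k ℓ]
    [Algebra (ZMod ℓ) k] [IsAlgClosure (ZMod ℓ) k]
    (n : ℕ) (G : Type) [Group G] [Fintype G]
    (Z : Subgroup G) [Z.Normal] (hZc : Z ≤ Subgroup.center G) (hZ2 : Nat.card Z = 2)
    (cover : G ⧸ Z ≃* Equiv.Perm (Fin n))
    (b : MonoidAlgebra k G) (hb : IsBlock b) [Fact (IsCentralIdem b)] :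
    ∃ E : ModuleCat.{0} (Corner b) ≌ ModuleCat.{0} (FrobTwist ℓ (Corner b)),
      ∃ hadd : E.functor.Additive,
        @Functor.Linear k _ _ _ _ _ _ _ _ _ E.functor := by
  obtain ⟨z, hz⟩ := exists_isDoubleCover hZ2 cover
  obtain ⟨e⟩ := double_cover_symmetricGroup_block_morita_frobenius_number_one_general ℓ hz hb
  exact exists_linear_equivalence_of_algEquiv e
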